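/- Let N ≥ 2, s ∈ (0,1), let B ⊂ ℝ^N be an open ball centered at the origin, and let u be a continuous first nontrivial eigenfunction on B which is not radially symmetric. Let p ∈ 𝕊^{N−1} be such that u is foliated Schwarz symmetric with respect to p. Then v := u − u∘σ_p is a first nontrivial eigenfunction on B which satisfies v∘σ_p = −v (antisymmetry with respect to the hyperplane {x·p = 0}), is foliated Schwarz symmetric with respect to p, and the open set {x ∈ B : v(x) ≠ 0} has exactly two connected components. -/

import Mathlib

open MeasureTheory Filter Topology Bornology Set
open scoped ENNReal NNReal

noncomputable section

namespace FracNeumann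

abbrev Euc (N : ℕ) : Type := EuclideanSpace ℝ (Fin N)

/-- The kernel weight `|x - y| ^ (N + 2s)`. -/
def kern (N : ℕ) (s : ℝ) (x y : Euc N) : ℝ := ‖x - y‖ ^ ((N : ℝ) + 2 * s)

/-- The region `ℝ^{2N} \ (Ω^c × Ω^c)`, where `Ω^c := ℝ^N \ closure Ω`. -/
def reg (N : ℕ) (Ω : Set (Euc N)) : Set (Euc N × Euc N) :=
  {q | q.1 ∈ closure Ω ∨ q.2 ∈ closure Ω}

/-- The squared seminorm `[u]_{H^s_{Ω,0}}²`, as an extended real number. -/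
def semiSq (N : ℕ) (s : ℝ) (Ω : Set (Euc N)) (u : Euc N → ℝ) : ℝ≥0∞ :=
  ∫⁻ q in reg N Ω, ENNReal.ofReal ((u q.1 - u q.2) ^ 2 / kern N s q.1 q.2)

/-- `∫_Ω u²`, as an extended real number. -/
def l2sq (N : ℕ) (Ω : Set (Euc N)) (u : Euc N → ℝ) : ℝ≥0∞ :=
  ∫⁻ x in Ω, ENNReal.ofReal ((u x) ^ 2)

/-- Membership in `H^s_{Ω,0}`. -/
def memHs (N : ℕ) (s : ℝ) (Ω : Set (Euc N)) (u : Euc N → ℝ) : Prop :=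
  Measurable u ∧ l2sq N Ω u < ⊤ ∧ semiSq N s Ω u < ⊤

/-- The squared Gagliardo seminorm `[u]_{H^s(Ω)}²`. -/
def semiSqOn (N : ℕ) (s : ℝ) (Ω : Set (Euc N)) (u : Euc N → ℝ) : ℝ≥0∞ :=
  ∫⁻ q in Ω ×ˢ Ω, ENNReal.ofReal ((u q.1 - u q.2) ^ 2 / kern N s q.1 q.2)

/-- Membership in `H^s(Ω)` (for functions defined on all of `ℝ^N`). -/
def memHsOn (N : ℕ) (s : ℝ) (Ω : Set (Euc N)) (u : Euc N → ℝ) : Prop :=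
  Measurable u ∧ l2sq N Ω u < ⊤ ∧ semiSqOn N s Ω u < ⊤

/-- The normalizing constant `c_{N,s}` of the fractional Laplacian. -/
def cNs (N : ℕ) (s : ℝ) : ℝ :=
  (4 : ℝ) ^ s * s * Real.Gamma ((N : ℝ) / 2 + s) /
    (Real.pi ^ ((N : ℝ) / 2) * Real.Gamma (1 - s))

/-- The nonlocal Neumann derivative `𝒩_s u`. -/
def Nneu (N : ℕ) (s : ℝ) (Ω : Set (Euc N)) (u : Euc N → ℝ) (x : Euc N) : ℝ :=
  cNs N s * ∫ y in Ω, (u x - u y) / kern N s x y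

/-- Membership in `H̃^s_{Ω,0}`: members of `H^s_{Ω,0}` with `𝒩_s u = 0` a.e. in `Ω^c`. -/
def memHsTilde (N : ℕ) (s : ℝ) (Ω : Set (Euc N)) (u : Euc N → ℝ) : Prop :=
  memHs N s Ω u ∧ ∀ᵐ x ∂(volume.restrict (closure Ω)ᶜ), Nneu N s Ω u x = 0

/-- The first nontrivial Neumann eigenvalue `μ₁^{(s)}(Ω)`. -/
def mu1 (N : ℕ) (s : ℝ) (Ω : Set (Euc N)) : ℝ :=
  sInf {t : ℝ | ∃ u : Euc N → ℝ, memHs N s Ω u ∧ (∫ x in Ω, (u x) ^ 2) = 1 ∧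
    (∫ x in Ω, u x) = 0 ∧ t = cNs N s / 2 * (semiSq N s Ω u).toReal}

/-- The bilinear form (without the constant). -/
def bform (N : ℕ) (s : ℝ) (Ω : Set (Euc N)) (u v : Euc N → ℝ) : ℝ :=
  ∫ q in reg N Ω, (u q.1 - u q.2) * (v q.1 - v q.2) / kern N s q.1 q.2

/-- First nontrivial eigenfunction: weak solution associated to `μ₁^{(s)}(Ω)`. -/
def IsFirstEigen (N : ℕ) (s : ℝ) (Ω : Set (Euc N)) (u : Euc N → ℝ) : Prop :=
  memHs N s Ω u ∧ ¬ (u =ᵐ[volume.restrict Ω] 0) ∧ (∫ x in Ω, u x) = 0 ∧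
    ∀ v : Euc N → ℝ, memHs N s Ω v →
      cNs N s / 2 * bform N s Ω u v = mu1 N s Ω * ∫ x in Ω, u x * v x

/-- Reflection `σ_e(x) = x - 2(x·e)e` across the hyperplane `{x·e = 0}`. -/
def reflect (N : ℕ) (e x : Euc N) : Euc N := x - (2 * (inner ℝ x e : ℝ)) • e

/-- The polarization `P_e u` with respect to the hyperplane `{x·e = 0}`. -/
def polarize (N : ℕ) (e : Euc N) (u : Euc N → ℝ) (x : Euc N) : ℝ :=
  if 0 ≤ (inner ℝ x e : ℝ) then min (u x) (u (reflect N e x))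
  else max (u x) (u (reflect N e x))

/-- Foliated Schwarz symmetry with respect to `p`. -/
def FoliatedSchwarz (N : ℕ) (p : Euc N) (u : Euc N → ℝ) : Prop :=
  ∃ uh : ℝ → ℝ → ℝ, (∀ r : ℝ, AntitoneOn (uh r) (Icc 0 Real.pi)) ∧
    ∀ x : Euc N, x ≠ 0 → u x = uh ‖x‖ (Real.arccos ((inner ℝ x p : ℝ) / ‖x‖))

/-- Radial symmetry (pointwise). -/
def Radial (N : ℕ) (u : Euc N → ℝ) : Prop := ∃ f : ℝ → ℝ, ∀ x, u x = f ‖x‖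

/-- Radial symmetry (a.e.). -/
def RadialAE (N : ℕ) (u : Euc N → ℝ) : Prop :=
  ∃ f : ℝ → ℝ, ∀ᵐ x : Euc N ∂volume, u x = f ‖x‖

/-- The set `{x ∈ Ω : u x ≠ 0}` has exactly two connected components. -/
def TwoNodal (N : ℕ) (Ω : Set (Euc N)) (u : Euc N → ℝ) : Prop :=
  Nat.card (ConnectedComponents {x : Euc N // x ∈ Ω ∧ u x ≠ 0}) = 2

/-- Bounded Lipschitz domain: open, bounded, connected, and near every boundary point the set
is the region above the graph of a Lipschitz function in some direction `e`. -/
def IsLipschitzDomain (N : ℕ) (Ω : Set (Euc N)) : Prop :=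
  IsOpen Ω ∧ IsBounded Ω ∧ IsConnected Ω ∧
    ∀ x ∈ frontier Ω, ∃ e : Euc N, ‖e‖ = 1 ∧ ∃ r : ℝ, 0 < r ∧
      ∃ (L : NNReal) (f : Euc N → ℝ), LipschitzWith L f ∧
        ∀ y ∈ Metric.ball x r,
          (y ∈ Ω ↔ f (y - ((inner ℝ y e : ℝ)) • e) < (inner ℝ y e : ℝ))

/-- `g` is a weak gradient of `u` in `Ω`, square-integrable on `Ω`. -/
def IsWeakGradient (N : ℕ) (Ω : Set (Euc N)) (u : Euc N → ℝ) (g : Euc N → Euc N) : Prop :=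
  Measurable g ∧ (∫⁻ x in Ω, ENNReal.ofReal (‖g x‖ ^ 2)) < ⊤ ∧
    ∀ φ : Euc N → ℝ, ContDiff ℝ (⊤ : ℕ∞) φ → HasCompactSupport φ → tsupport φ ⊆ Ω →
      ∀ i : Fin N, (∫ x in Ω, u x * fderiv ℝ φ x (EuclideanSpace.single i 1)) =
        - ∫ x in Ω, g x i * φ x

/-- Membership in `H¹(Ω)`. -/
def memH1 (N : ℕ) (Ω : Set (Euc N)) (u : Euc N → ℝ) : Prop :=
  Measurable u ∧ l2sq N Ω u < ⊤ ∧ ∃ g, IsWeakGradient N Ω u g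

/-- `∫_Ω |∇u|²`, as an extended real number. -/
def gradSq (N : ℕ) (Ω : Set (Euc N)) (u : Euc N → ℝ) : ℝ≥0∞ :=
  ⨅ (g : Euc N → Euc N) (_ : IsWeakGradient N Ω u g), ∫⁻ x in Ω, ENNReal.ofReal (‖g x‖ ^ 2)

/-- Rayleigh quotient for the fractional Neumann problem. -/
def rayleighS (N : ℕ) (s : ℝ) (Ω : Set (Euc N)) (u : Euc N → ℝ) : ℝ≥0∞ :=
  ENNReal.ofReal (cNs N s / 2) * semiSq N s Ω u / l2sq N Ω u

/-- Rayleigh quotient for the local Neumann problem. -/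
def rayleigh1 (N : ℕ) (Ω : Set (Euc N)) (u : Euc N → ℝ) : ℝ≥0∞ :=
  gradSq N Ω u / l2sq N Ω u

/-- The min-max value `μ_n^{(s)}(Ω)` over `n`-dimensional subspaces of `H^s_{Ω,0} ∩ L²₀(Ω)`. -/
def muNs (N : ℕ) (s : ℝ) (Ω : Set (Euc N)) (n : ℕ) : ℝ≥0∞ :=
  ⨅ (A : Submodule ℝ (Euc N → ℝ)) (_ : Module.finrank ℝ A = n ∧
      (∀ u ∈ A, memHs N s Ω u ∧ (∫ x in Ω, u x) = 0) ∧
      (∀ u ∈ A, u =ᵐ[(volume : Measure (Euc N))] 0 → u = 0)),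
    ⨆ (u : Euc N → ℝ) (_ : u ∈ A ∧ u ≠ 0), rayleighS N s Ω u

/-- The min-max value over `n`-dimensional subspaces of `H̃^s_{Ω,0} ∩ L²₀(Ω)`. -/
def muNsTilde (N : ℕ) (s : ℝ) (Ω : Set (Euc N)) (n : ℕ) : ℝ≥0∞ :=
  ⨅ (A : Submodule ℝ (Euc N → ℝ)) (_ : Module.finrank ℝ A = n ∧
      (∀ u ∈ A, memHsTilde N s Ω u ∧ (∫ x in Ω, u x) = 0) ∧
      (∀ u ∈ A, u =ᵐ[(volume : Measure (Euc N))] 0 → u = 0)),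
    ⨆ (u : Euc N → ℝ) (_ : u ∈ A ∧ u ≠ 0), rayleighS N s Ω u

/-- The min-max value `μ_n^{(1)}(Ω)` over `n`-dimensional subspaces of `H¹(Ω) ∩ L²₀(Ω)`. -/
def muN1 (N : ℕ) (Ω : Set (Euc N)) (n : ℕ) : ℝ≥0∞ :=
  ⨅ (A : Submodule ℝ (Euc N → ℝ)) (_ : Module.finrank ℝ A = n ∧
      (∀ u ∈ A, memH1 N Ω u ∧ (∫ x in Ω, u x) = 0) ∧
      (∀ u ∈ A, u =ᵐ[volume.restrict Ω] 0 → u = 0)),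
    ⨆ (u : Euc N → ℝ) (_ : u ∈ A ∧ u ≠ 0), rayleigh1 N Ω u

/-- `μ_n^{(s)}(Ω)` including `μ₀^{(s)}(Ω) := 0`. -/
def muNsFull (N : ℕ) (s : ℝ) (Ω : Set (Euc N)) (n : ℕ) : ℝ≥0∞ :=
  if n = 0 then 0 else muNs N s Ω n

/-- `μ_n^{(1)}(Ω)` including `μ₀^{(1)}(Ω) := 0`. -/
def muN1Full (N : ℕ) (Ω : Set (Euc N)) (n : ℕ) : ℝ≥0∞ :=
  if n = 0 then 0 else muN1 N Ω n

/-- The squared `H^s_{Ω,0}`-seminorm of the `s`-minimal extension of `u`: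
the minimal value of `[v]²` over `v ∈ H^s_{Ω,0}` with `v = u` a.e. in `Ω`. -/
def minExtSemiSq (N : ℕ) (s : ℝ) (Ω : Set (Euc N)) (u : Euc N → ℝ) : ℝ≥0∞ :=
  ⨅ (v : Euc N → ℝ) (_ : memHs N s Ω v ∧ v =ᵐ[volume.restrict Ω] u), semiSq N s Ω v

/-- `ω_{N-1}`: volume of the unit ball of `ℝ^{N-1}`. -/
def omegaPrev (N : ℕ) : ℝ := (volume (Metric.ball (0 : Euc (N - 1)) 1)).toReal

/-- Membership in `L²₀(Ω)`. -/
def memL20 (N : ℕ) (Ω : Set (Euc N)) (u : Euc N → ℝ) : Prop :=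
  Measurable u ∧ l2sq N Ω u < ⊤ ∧ (∫ x in Ω, u x) = 0

/-- The functional `F_s` (value `+∞` outside `H^s(Ω)`). -/
def Fs (N : ℕ) (s : ℝ) (Ω : Set (Euc N)) (u : Euc N → ℝ) : ℝ≥0∞ :=
  ENNReal.ofReal (1 - s) * minExtSemiSq N s Ω u

/-- The functional `F₁` (value `+∞` outside `H¹(Ω)`). -/
def F1 (N : ℕ) (Ω : Set (Euc N)) (u : Euc N → ℝ) : ℝ≥0∞ :=
  ENNReal.ofReal (omegaPrev N / (2 * N)) * gradSq N Ω u

end FracNeumann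
namespace FracNeumann

/-- The reflection as a linear isometry equivalence. -/
def refl (N : ℕ) (p : Euc N) : Euc N ≃ₗᵢ[ℝ] Euc N := (ℝ ∙ p)ᗮ.reflection

lemma reflect_eq {N : ℕ} {p : Euc N} (hp : ‖p‖ = 1) (x : Euc N) :
    reflect N p x = refl N p x := by
  rw [refl, Submodule.reflection_orthogonal_apply, Submodule.reflection_singleton_apply]
  simp only [reflect, hp, real_inner_comm]
  simp
  module

lemma refl_refl {N : ℕ} (p x : Euc N) : refl N p (refl N p x) = x := by
  simp [refl]

attribute [irreducible] refl

lemma inner_refl {N : ℕ} {p : Euc N} (hp : ‖p‖ = 1) (x : Euc N) :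
    (inner ℝ (refl N p x) p : ℝ) = - inner ℝ x p := by
  rw [← reflect_eq hp, reflect, inner_sub_left, inner_smul_left, real_inner_self_eq_norm_sq, hp]
  simp; ring

lemma refl_mp {N : ℕ} (p : Euc N) : MeasurePreserving (refl N p) volume volume :=
  (refl N p).measurePreserving

lemma norm_sub_refl {N : ℕ} {p : Euc N} (hp : ‖p‖ = 1) (x y : Euc N) :
    ‖x - refl N p y‖ ^ 2 = ‖x - y‖ ^ 2 + 4 * (inner ℝ x p : ℝ) * (inner ℝ y p : ℝ) := by
  rw [← reflect_eq hp, reflect, show x - (y - (2 * (inner ℝ y p : ℝ)) • p)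
    = (x - y) + (2 * (inner ℝ y p : ℝ)) • p by abel, norm_add_sq_real, inner_smul_right,
    inner_sub_left, norm_smul, hp]
  simp only [mul_one, Real.norm_eq_abs, sq_abs]; ring

lemma kern_symm (N : ℕ) (s : ℝ) (x y : Euc N) : kern N s x y = kern N s y x := by
  rw [kern, kern, norm_sub_rev]

lemma kern_nonneg (N : ℕ) (s : ℝ) (x y : Euc N) : 0 ≤ kern N s x y := by
  unfold kern; positivity

lemma kern_refl {N : ℕ} (s : ℝ) (p x y : Euc N) :
    kern N s (refl N p x) (refl N p y) = kern N s x y := by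
  rw [kern, kern, ← map_sub, LinearIsometryEquiv.norm_map]

lemma kern_pos {N : ℕ} (s : ℝ) {x y : Euc N} (h : x ≠ y) : 0 < kern N s x y := by
  unfold kern
  have : 0 < ‖x - y‖ := norm_pos_iff.2 (sub_ne_zero.2 h)
  positivity

lemma measurable_kern (N : ℕ) (s : ℝ) :
    Measurable (fun q : Euc N × Euc N => kern N s q.1 q.2) := by
  unfold kern
  exact ((measurable_fst.sub measurable_snd).norm).pow_const _

lemma cNs_pos {N : ℕ} {s : ℝ} (hs : s ∈ Set.Ioo (0 : ℝ) 1) : 0 < cNs N s := by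
  have h1 : 0 < Real.Gamma ((N : ℝ) / 2 + s) := Real.Gamma_pos_of_pos (by have := hs.1; positivity)
  have h2 : 0 < Real.Gamma (1 - s) := Real.Gamma_pos_of_pos (by linarith [hs.2])
  have h3 := Real.pi_pos
  have := hs.1
  unfold cNs; positivity

lemma mu1_nonneg {N : ℕ} {s : ℝ} (hs : s ∈ Set.Ioo (0 : ℝ) 1) (Ω : Set (Euc N)) :
    0 ≤ mu1 N s Ω := by
  apply Real.sInf_nonneg
  rintro t ⟨u, -, -, -, rfl⟩
  have := cNs_pos (N := N) hs
  positivity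

lemma measurableSet_reg (N : ℕ) (Ω : Set (Euc N)) : MeasurableSet (reg N Ω) :=
  (measurable_fst isClosed_closure.measurableSet).union
    (measurable_snd isClosed_closure.measurableSet)

/-- measurability of the difference quotient -/
lemma measurable_dq {N : ℕ} (s : ℝ) {u v : Euc N → ℝ} (hu : Measurable u) (hv : Measurable v) :
    Measurable (fun q : Euc N × Euc N =>
      (u q.1 - u q.2) * (v q.1 - v q.2) / kern N s q.1 q.2) := by
  have := measurable_kern N s
  fun_prop

lemma integrable_sq {N : ℕ} {s : ℝ} {Ω : Set (Euc N)} {u : Euc N → ℝ} (hu : memHs N s Ω u) :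
    IntegrableOn (fun q : Euc N × Euc N => (u q.1 - u q.2) ^ 2 / kern N s q.1 q.2)
      (reg N Ω) := by
  refine ⟨?_, ?_⟩
  · have := measurable_dq s hu.1 hu.1
    simp only [pow_two]
    exact this.aestronglyMeasurable
  · rw [hasFiniteIntegral_iff_ofReal]
    · exact hu.2.2
    · exact ae_of_all _ fun q => div_nonneg (sq_nonneg _) (kern_nonneg _ _ _ _)

lemma integrable_bform {N : ℕ} {s : ℝ} {Ω : Set (Euc N)} {u v : Euc N → ℝ}
    (hu : memHs N s Ω u) (hv : memHs N s Ω v) :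
    IntegrableOn (fun q : Euc N × Euc N =>
      (u q.1 - u q.2) * (v q.1 - v q.2) / kern N s q.1 q.2) (reg N Ω) := by
  refine Integrable.mono' ((integrable_sq hu).add (integrable_sq hv))
    (measurable_dq s hu.1 hv.1).aestronglyMeasurable (ae_of_all _ fun q => ?_)
  have := kern_nonneg N s q.1 q.2
  simp only [Pi.add_apply]
  rw [norm_div, Real.norm_eq_abs, Real.norm_eq_abs, abs_of_nonneg this, ← add_div]
  gcongr
  rw [abs_le]; constructor <;> nlinarith [sq_nonneg ((u q.1 - u q.2) + (v q.1 - v q.2)), sq_nonneg ((u q.1 - u q.2) - (v q.1 - v q.2))]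

lemma integrable_l2 {N : ℕ} {s : ℝ} {Ω : Set (Euc N)} {u v : Euc N → ℝ}
    (hu : memHs N s Ω u) (hv : memHs N s Ω v) :
    IntegrableOn (fun x => u x * v x) Ω := by
  have key : ∀ {w : Euc N → ℝ}, memHs N s Ω w → IntegrableOn (fun x => w x ^ 2) Ω := by
    intro w hw
    refine ⟨(hw.1.pow_const 2).aestronglyMeasurable, ?_⟩
    rw [hasFiniteIntegral_iff_ofReal (ae_of_all _ fun q => sq_nonneg _)]
    exact hw.2.1
  refine Integrable.mono' ((key hu).add (key hv))
    (hu.1.mul hv.1).aestronglyMeasurable (ae_of_all _ fun q => ?_)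
  simp only [Pi.add_apply, Real.norm_eq_abs]
  rw [abs_le]; constructor <;> nlinarith [sq_nonneg (u q + v q), sq_nonneg (u q - v q)]

/-- Domination criterion for membership. -/
lemma memHs_of_le {N : ℕ} {s : ℝ} {Ω : Set (Euc N)} {u v w : Euc N → ℝ}
    (hu : memHs N s Ω u) (hv : memHs N s Ω v) (hw : Measurable w)
    (h1 : ∀ x, |w x| ≤ |u x| + |v x|)
    (h2 : ∀ x y, |w x - w y| ≤ |u x - u y| + |v x - v y|) : memHs N s Ω w := by
  have sq : ∀ a b c : ℝ, |a| ≤ |b| + |c| → a ^ 2 ≤ 2 * (b ^ 2 + c ^ 2) := by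
    intro a b c h
    have := sq_le_sq' (by linarith [abs_nonneg a, abs_nonneg b, abs_nonneg c]) h
    rw [sq_abs] at this
    nlinarith [sq_nonneg (|b| - |c|), sq_abs b, sq_abs c]
  refine ⟨hw, ?_, ?_⟩
  · have hi : IntegrableOn (fun x => 2 * (u x * u x + v x * v x)) Ω :=
      ((integrable_l2 hu hu).add (integrable_l2 hv hv)).const_mul 2
    refine lt_of_le_of_lt (lintegral_mono fun x => ?_) hi.lintegral_lt_top
    apply ENNReal.ofReal_le_ofReal
    have := sq _ _ _ (h1 x); nlinarith
  · have hi := ((integrable_sq hu).add (integrable_sq hv)).const_mul 2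
    refine lt_of_le_of_lt (lintegral_mono fun q => ?_) hi.lintegral_lt_top
    apply ENNReal.ofReal_le_ofReal
    simp only [Pi.add_apply]
    rw [← add_div, ← mul_div_assoc]
    have := kern_nonneg N s q.1 q.2
    gcongr
    exact sq _ _ _ (h2 _ _)

section Refl
variable {N : ℕ} {s : ℝ} {R : ℝ} {p : Euc N}

lemma refl_mem_ball (x : Euc N) : refl N p x ∈ Metric.ball (0 : Euc N) R ↔ x ∈ Metric.ball 0 R := by
  simp

lemma refl_mem_cball (x : Euc N) : refl N p x ∈ closure (Metric.ball (0 : Euc N) R) ↔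
    x ∈ closure (Metric.ball (0 : Euc N) R) := by
  rcases eq_or_ne R 0 with h | h
  · simp [h]
  · simp [closure_ball _ h]

lemma refl_prod_mp : MeasurePreserving
    (fun q : Euc N × Euc N => (refl N p q.1, refl N p q.2)) volume volume :=
  (refl_mp p).prod (refl_mp p)

lemma refl_emb : MeasurableEmbedding (refl N p) :=
  (refl N p).toHomeomorph.measurableEmbedding

lemma refl_prod_emb : MeasurableEmbedding
    (fun q : Euc N × Euc N => (refl N p q.1, refl N p q.2)) :=
  ((refl N p).toHomeomorph.prodCongr (refl N p).toHomeomorph).measurableEmbedding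

lemma refl_prod_pre : (fun q : Euc N × Euc N => (refl N p q.1, refl N p q.2)) ⁻¹'
    (reg N (Metric.ball 0 R)) = reg N (Metric.ball 0 R) := by
  ext q; simp only [reg, mem_preimage, Set.mem_ofPred_eq, refl_mem_cball]

lemma refl_pre : (refl N p) ⁻¹' (Metric.ball 0 R) = Metric.ball 0 R := by
  ext q; simp only [mem_preimage, refl_mem_ball]

lemma memHs_refl {u : Euc N → ℝ} (hu : memHs N s (Metric.ball 0 R) u) :
    memHs N s (Metric.ball 0 R) (fun x => u (refl N p x)) := by
  refine ⟨hu.1.comp (refl N p).continuous.measurable, ?_, ?_⟩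
  · have := (refl_mp p).setLIntegral_comp_preimage_emb refl_emb
      (fun x => ENNReal.ofReal (u x ^ 2)) (Metric.ball 0 R)
    rw [refl_pre] at this
    have h := hu.2.1
    rw [l2sq, ← this] at h; exact h
  · have := (refl_prod_mp (p := p)).setLIntegral_comp_preimage_emb refl_prod_emb
      (fun q => ENNReal.ofReal ((u q.1 - u q.2) ^ 2 / kern N s q.1 q.2)) (reg N (Metric.ball 0 R))
    rw [refl_prod_pre] at this
    have h := hu.2.2
    rw [semiSq, ← this] at h
    simp only [kern_refl] at h
    exact h

lemma bform_refl (u v : Euc N → ℝ) :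
    bform N s (Metric.ball 0 R) (fun x => u (refl N p x)) v =
    bform N s (Metric.ball 0 R) u (fun x => v (refl N p x)) := by
  have := (refl_prod_mp (p := p)).setIntegral_preimage_emb refl_prod_emb
      (fun q => (u (refl N p q.1) - u (refl N p q.2)) * (v q.1 - v q.2) / kern N s q.1 q.2)
      (reg N (Metric.ball 0 R))
  rw [refl_prod_pre] at this
  rw [bform, ← this, bform]
  simp only [kern_refl, refl_refl]

lemma int_refl (f : Euc N → ℝ) :
    ∫ x in Metric.ball 0 R, f (refl N p x) = ∫ x in Metric.ball 0 R, f x := by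
  have := (refl_mp p).setIntegral_preimage_emb refl_emb f (Metric.ball 0 R)
  rwa [refl_pre] at this

end Refl

/-- linear part: the antisymmetrization is a weak solution -/
lemma anti_weak {N : ℕ} {s R : ℝ} {p : Euc N} {u : Euc N → ℝ}
    (hu : IsFirstEigen N s (Metric.ball 0 R) u) :
    memHs N s (Metric.ball 0 R) (fun x => u x - u (refl N p x)) ∧
    (∫ x in Metric.ball 0 R, (u x - u (refl N p x))) = 0 ∧
    ∀ v : Euc N → ℝ, memHs N s (Metric.ball 0 R) v →
      cNs N s / 2 * bform N s (Metric.ball 0 R) (fun x => u x - u (refl N p x)) v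
        = mu1 N s (Metric.ball 0 R) * ∫ x in Metric.ball 0 R, (u x - u (refl N p x)) * v x := by
  obtain ⟨hm, h0, hi, he⟩ := hu
  have hm' := memHs_refl (p := p) hm
  have hone : memHs N s (Metric.ball (0 : Euc N) R) (fun _ => 1) := by
    refine ⟨measurable_const, ?_, ?_⟩
    · simp only [l2sq]; simp [measure_ball_lt_top]
    · simp [semiSq]
  have hui : IntegrableOn u (Metric.ball 0 R) := by simpa using integrable_l2 hm hone
  have hui' : IntegrableOn (fun x => u (refl N p x)) (Metric.ball 0 R) := by
    simpa using integrable_l2 hm' hone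
  refine ⟨memHs_of_le hm hm' (hm.1.sub hm'.1) (fun x => abs_sub _ _) fun x y => ?_, ?_, ?_⟩
  · calc _ = |(u x - u y) - (u (refl N p x) - u (refl N p y))| := by congr 1; ring
      _ ≤ _ := abs_sub _ _
  · rw [integral_sub hui hui', int_refl, sub_self]
  · intro v hv
    have hv' := memHs_refl (p := p) hv
    have e1 : bform N s (Metric.ball 0 R) (fun x => u x - u (refl N p x)) v =
        bform N s (Metric.ball 0 R) u v -
          bform N s (Metric.ball 0 R) (fun x => u (refl N p x)) v := by
      simp only [bform]
      rw [← integral_sub (integrable_bform hm hv) (integrable_bform hm' hv)]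
      congr 1; ext q; ring
    have e2 : (∫ x in Metric.ball 0 R, (u x - u (refl N p x)) * v x) =
        (∫ x in Metric.ball 0 R, u x * v x) - ∫ x in Metric.ball 0 R, u x * v (refl N p x) := by
      rw [← int_refl (p := p) (fun x => u x * v (refl N p x))]
      simp only [refl_refl]
      rw [← integral_sub (integrable_l2 hm hv) (integrable_l2 hm' hv)]
      congr 1; ext q; ring
    rw [e1, bform_refl, mul_sub, he v hv, he _ hv', e2, mul_sub]

end FracNeumann
namespace FracNeumann

/-- the truncated radial kernel -/
def mker (N : ℕ) (s : ℝ) (z : Euc N) : ℝ := min (‖z‖ ^ 2) 1 / ‖z‖ ^ ((N : ℝ) + 2 * s)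

lemma mker_nonneg (N : ℕ) (s : ℝ) (z : Euc N) : 0 ≤ mker N s z := by
  unfold mker; positivity

lemma integrable_mker {N : ℕ} (hN : 2 ≤ N) {s : ℝ} (hs : s ∈ Set.Ioo (0 : ℝ) 1) :
    Integrable (mker N s) := by
  have : Nontrivial (Euc N) := by
    have : Nonempty (Fin N) := ⟨⟨0, by omega⟩⟩
    infer_instance
  have := integrable_fun_norm_addHaar (volume : Measure (Euc N))
    (f := fun r : ℝ => min (r ^ 2) 1 / r ^ ((N : ℝ) + 2 * s))
  refine this.2 ?_
  rw [finrank_euclideanSpace_fin]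
  have hpow : ∀ y : ℝ, 0 < y → y ^ (N - 1) = y ^ ((N : ℝ) - 1) := by
    intro y hy
    rw [← Real.rpow_natCast, Nat.cast_sub (by omega)]; simp
  rw [← Ioc_union_Ioi_eq_Ioi zero_le_one]
  refine IntegrableOn.union ?_ ?_
  · have h : IntegrableOn (fun y : ℝ => y ^ (1 - 2 * s)) (Ioc 0 1) := by
      rw [← intervalIntegrable_iff_integrableOn_Ioc_of_le zero_le_one]
      exact intervalIntegral.intervalIntegrable_rpow' (by linarith [hs.2])
    refine h.congr_fun (fun y hy => ?_) measurableSet_Ioc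
    have hy0 : 0 < y := hy.1
    have : min (y ^ 2) 1 = y ^ (2 : ℝ) := by
      rw [min_eq_left (by nlinarith [hy.2])]; norm_cast
    simp only [smul_eq_mul]
    rw [this, hpow y hy0, ← Real.rpow_sub hy0, ← Real.rpow_add hy0]
    congr 1; ring
  · have h : IntegrableOn (fun y : ℝ => y ^ (-1 - 2 * s)) (Ioi 1) :=
      integrableOn_Ioi_rpow_of_lt (by linarith [hs.1]) one_pos
    refine h.congr_fun (fun y hy => ?_) measurableSet_Ioi
    have hy1 : (1 : ℝ) < y := hy
    have hy0 : 0 < y := by linarith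
    have : min (y ^ 2) 1 = 1 := min_eq_right (by nlinarith)
    simp only [smul_eq_mul]
    rw [this, hpow y hy0, one_div, ← Real.rpow_neg hy0.le, ← Real.rpow_add hy0]
    congr 1; ring

/-- the quadratic bump -/
def bump {N : ℕ} (x0 : Euc N) (ρ : ℝ) (x : Euc N) : ℝ := max (ρ ^ 2 - ‖x - x0‖ ^ 2) 0

section Bump
variable {N : ℕ} {x0 : Euc N} {ρ : ℝ}

lemma bump_cont : Continuous (bump x0 ρ) := by unfold bump; fun_prop

lemma bump_nonneg (x : Euc N) : 0 ≤ bump x0 ρ x := le_max_right _ _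

lemma bump_le (h0 : 0 < ρ) (h1 : ρ ≤ 1 / 2) (x : Euc N) : bump x0 ρ x ≤ 1 :=
  max_le (by nlinarith [sq_nonneg ‖x - x0‖]) zero_le_one

lemma bump_zero (h0 : 0 < ρ) {x : Euc N} (h : x ∉ Metric.closedBall x0 ρ) : bump x0 ρ x = 0 := by
  rw [Metric.mem_closedBall, dist_eq_norm, not_le] at h
  exact max_eq_right (by nlinarith)

lemma bump_eq (h0 : 0 < ρ) (x : Euc N) : bump x0 ρ x = ρ ^ 2 - (min ‖x - x0‖ ρ) ^ 2 := by
  unfold bump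
  rcases le_total ‖x - x0‖ ρ with h | h
  · rw [min_eq_left h, max_eq_left]; nlinarith [norm_nonneg (x - x0)]
  · rw [min_eq_right h, max_eq_right]; · ring
    nlinarith [norm_nonneg (x - x0)]

lemma bump_lip (h0 : 0 < ρ) (h1 : ρ ≤ 1 / 2) (x y : Euc N) :
    |bump x0 ρ x - bump x0 ρ y| ≤ ‖x - y‖ := by
  rw [bump_eq h0, bump_eq h0]
  set a := min ‖x - x0‖ ρ
  set b := min ‖y - x0‖ ρ
  have ha : 0 ≤ a := le_min (norm_nonneg _) h0.le
  have hb : 0 ≤ b := le_min (norm_nonneg _) h0.le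
  have ha' : a ≤ ρ := min_le_right _ _
  have hb' : b ≤ ρ := min_le_right _ _
  have hab : |b - a| ≤ ‖x - y‖ := by
    refine (abs_min_sub_min_le_max _ _ _ _).trans ?_
    rw [sub_self, abs_zero, max_eq_left (abs_nonneg _)]
    refine (abs_norm_sub_norm_le _ _).trans ?_
    rw [norm_sub_rev x y]; simp
  have : ρ ^ 2 - a ^ 2 - (ρ ^ 2 - b ^ 2) = (b - a) * (a + b) := by ring
  rw [this, abs_mul, abs_of_nonneg (add_nonneg ha hb)]
  have := abs_nonneg (b - a)
  nlinarith

lemma bump_sq (h0 : 0 < ρ) (h1 : ρ ≤ 1 / 2) (x y : Euc N) :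
    (bump x0 ρ x - bump x0 ρ y) ^ 2 ≤ min (‖x - y‖ ^ 2) 1 := by
  refine le_min ?_ ?_
  · rw [← sq_abs]; exact pow_le_pow_left₀ (abs_nonneg _) (bump_lip h0 h1 x y) 2
  · nlinarith [bump_nonneg (x0 := x0) (ρ := ρ) x, bump_nonneg (x0 := x0) (ρ := ρ) y,
      bump_le (x0 := x0) h0 h1 x, bump_le (x0 := x0) h0 h1 y]

lemma bump_second (h0 : 0 < ρ) (h1 : ρ ≤ 1 / 2) (x z : Euc N) :
    2 * bump x0 ρ x - bump x0 ρ (x + z) - bump x0 ρ (x - z) ≤ 2 * min (‖z‖ ^ 2) 1 := by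
  have n1 := bump_nonneg (x0 := x0) (ρ := ρ) (x + z)
  have n2 := bump_nonneg (x0 := x0) (ρ := ρ) (x - z)
  have := bump_le (x0 := x0) h0 h1 x
  rw [mul_min_of_nonneg _ _ (by norm_num : (0 : ℝ) ≤ 2)]
  refine le_min ?_ (by linarith)
  have l1 : ρ ^ 2 - ‖x + z - x0‖ ^ 2 ≤ bump x0 ρ (x + z) := le_max_left _ _
  have l2 : ρ ^ 2 - ‖x - z - x0‖ ^ 2 ≤ bump x0 ρ (x - z) := le_max_left _ _
  have e1 : ‖x + z - x0‖ ^ 2 + ‖x - z - x0‖ ^ 2 = 2 * ‖x - x0‖ ^ 2 + 2 * ‖z‖ ^ 2 := by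
    have := parallelogram_law_with_norm ℝ (x - x0) z
    rw [show x + z - x0 = x - x0 + z by abel, show x - z - x0 = x - x0 - z by abel]
    nlinarith
  rcases max_choice (ρ ^ 2 - ‖x - x0‖ ^ 2) 0 with h | h
  · have : bump x0 ρ x = ρ ^ 2 - ‖x - x0‖ ^ 2 := h
    linarith
  · have : bump x0 ρ x = 0 := h
    nlinarith [sq_nonneg ‖z‖]

lemma bump_memHs (hN : 2 ≤ N) {s : ℝ} (hs : s ∈ Set.Ioo (0 : ℝ) 1) (h0 : 0 < ρ) (h1 : ρ ≤ 1 / 2)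
    (R : ℝ) : memHs N s (Metric.ball 0 R) (bump x0 ρ) := by
  refine ⟨bump_cont.measurable, ?_, ?_⟩
  · unfold l2sq
    refine lt_of_le_of_lt (lintegral_mono (g := fun _ => 1) fun x => ?_) ?_
    · rw [← ENNReal.ofReal_one]
      apply ENNReal.ofReal_le_ofReal
      nlinarith [bump_nonneg (x0 := x0) (ρ := ρ) x, bump_le (x0 := x0) h0 h1 x]
    · simp [measure_ball_lt_top]
  · set S := Metric.closedBall x0 ρ
    have hS : Integrable (S.indicator (fun _ => (1 : ℝ))) (volume : Measure (Euc N)) :=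
      (integrable_indicator_iff Metric.isClosed_closedBall.measurableSet).2
        (integrableOn_const (measure_closedBall_lt_top.ne))
    have c1 := hS.convolution_integrand (ContinuousLinearMap.mul ℝ ℝ) (integrable_mker hN hs)
    have c2 := c1.swap
    have c := c1.add c2
    refine lt_of_le_of_lt (setLIntegral_le_lintegral _ _) ?_
    refine lt_of_le_of_lt (lintegral_mono fun q => ?_) c.lintegral_lt_top
    apply ENNReal.ofReal_le_ofReal
    simp only [Pi.add_apply, Function.comp_apply, ContinuousLinearMap.mul_apply', Prod.fst_swap,
      Prod.snd_swap]
    have m1 : mker N s (q.2 - q.1) = mker N s (q.1 - q.2) := by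
      simp only [mker, norm_sub_rev]
    have main : (bump x0 ρ q.1 - bump x0 ρ q.2) ^ 2 / kern N s q.1 q.2 ≤ mker N s (q.1 - q.2) := by
      unfold mker kern
      gcongr
      exact bump_sq h0 h1 _ _
    have nn := mker_nonneg N s (q.1 - q.2)
    rw [m1]
    by_cases p1 : q.1 ∈ S <;> by_cases p2 : q.2 ∈ S
    · simp [p1, p2]; linarith
    · simp [p1, p2]; linarith
    · simp [p1, p2]; linarith
    · simp [p1, p2, bump_zero h0 p1, bump_zero h0 p2]

lemma bump_bform (hN : 2 ≤ N) {s : ℝ} (hs : s ∈ Set.Ioo (0 : ℝ) 1) (h0 : 0 < ρ) (h1 : ρ ≤ 1 / 2)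
    {φ : Euc N → ℝ} (hφ : Integrable φ) (hpos : ∀ x, 0 ≤ φ x)
    (hInt : Integrable (fun q : Euc N × Euc N =>
      (bump x0 ρ q.1 - bump x0 ρ q.2) * (φ q.1 - φ q.2) / kern N s q.1 q.2)) :
    ∫ q : Euc N × Euc N, (bump x0 ρ q.1 - bump x0 ρ q.2) * (φ q.1 - φ q.2) / kern N s q.1 q.2
      ≤ (2 * ∫ z, mker N s z) * ∫ x, φ x := by
  have mp := measurePreserving_prod_add (volume : Measure (Euc N)) (volume : Measure (Euc N))
  have emb : MeasurableEmbedding (fun z : Euc N × Euc N => (z.1, z.1 + z.2)) :=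
    (MeasurableEquiv.shearAddRight (Euc N)).measurableEmbedding
  have hInt2 := (mp.integrable_comp_emb emb).2 hInt
  have e := mp.integral_comp emb (fun q : Euc N × Euc N =>
      (bump x0 ρ q.1 - bump x0 ρ q.2) * (φ q.1 - φ q.2) / kern N s q.1 q.2)
  change _ = ∫ q : Euc N × Euc N, _ at e
  rw [← e]
  refine (integral_prod_symm _ hInt2).trans_le ?_
  have rhs : (2 * ∫ z, mker N s z) * ∫ x, φ x = ∫ z, (2 * ∫ x, φ x) * mker N s z := by
    rw [integral_const_mul]; ring
  rw [rhs]
  refine integral_mono hInt2.integral_prod_right ((integrable_mker hN hs).const_mul _) fun z => ?_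
  have bd : ∀ a b : Euc N → ℝ, Integrable a → Continuous b → (∀ x, |b x| ≤ 1) →
      Integrable (fun x => a x * b x) := fun a b ha hb hb1 =>
    ha.mul_bdd (c := 1) hb.aestronglyMeasurable (ae_of_all _ hb1)
  have babs : ∀ x y, |bump x0 ρ x - bump x0 ρ y| ≤ 1 := fun x y => abs_le.2
    ⟨by linarith [bump_nonneg (x0 := x0) (ρ := ρ) x, bump_le (x0 := x0) h0 h1 y],
     by linarith [bump_nonneg (x0 := x0) (ρ := ρ) y, bump_le (x0 := x0) h0 h1 x]⟩
  have cb := bump_cont (x0 := x0) (ρ := ρ)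
  have i1 : Integrable (fun x => φ x * (bump x0 ρ x - bump x0 ρ (x + z))) :=
    bd _ _ hφ (by fun_prop) fun x => babs _ _
  have i2 : Integrable (fun x => φ x * (bump x0 ρ (x - z) - bump x0 ρ x)) :=
    bd _ _ hφ (by fun_prop) fun x => babs _ _
  have i2' : Integrable (fun x => φ (x + z) * (bump x0 ρ x - bump x0 ρ (x + z))) := by
    simpa using i2.comp_add_right z
  have e2 : ∫ x, φ (x + z) * (bump x0 ρ x - bump x0 ρ (x + z)) =
      ∫ x, φ x * (bump x0 ρ (x - z) - bump x0 ρ x) := by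
    rw [← integral_add_right_eq_self (fun x => φ x * (bump x0 ρ (x - z) - bump x0 ρ x)) z]
    simp
  have e3 : ∫ x, (bump x0 ρ x - bump x0 ρ (x + z)) * (φ x - φ (x + z)) ≤
      (2 * min (‖z‖ ^ 2) 1) * ∫ x, φ x := by
    have : ∀ x, (bump x0 ρ x - bump x0 ρ (x + z)) * (φ x - φ (x + z)) =
      φ x * (bump x0 ρ x - bump x0 ρ (x + z)) - φ (x + z) * (bump x0 ρ x - bump x0 ρ (x + z)) :=
      fun x => by ring
    simp only [this]
    rw [integral_sub i1 i2', e2, ← integral_sub i1 i2, ← integral_const_mul]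
    refine integral_mono (i1.sub i2) (hφ.const_mul _) fun x => ?_
    have := bump_second (x0 := x0) h0 h1 x z
    have := mul_le_mul_of_nonneg_left this (hpos x)
    linarith
  have kz : ∀ x : Euc N, kern N s x (x + z) = ‖z‖ ^ ((N : ℝ) + 2 * s) := by
    intro x; simp [kern]
  simp only [Function.comp_apply, kz, integral_div]
  unfold mker
  rw [← mul_div_assoc]
  gcongr
  linarith

end Bump
end FracNeumann
namespace FracNeumann

lemma scalar_ineq {ax ay bx bY hx hy fx fy wx wy K Kt cx cy : ℝ}
    (h1 : bx * fx = 0) (h2 : bY * fy = 0) (h3 : hx * fx = 0) (h4 : hy * fy = 0)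
    (h5 : ax = wx - fx + hx) (h6 : ay = wy - fy + hy) (hK : 0 ≤ K)
    (h7 : fx * (ay * Kt - cy) ≤ fx * (hy * K)) (h8 : fy * (ax * Kt - cx) ≤ fy * (hx * K)) :
    (ax - bx - (ay - bY)) * (fx - fy) * K ≤ (wx - wy) * (fx - fy) * K +
      (fx * bY * K - fx * ay * Kt + fx * cy) + (fy * bx * K - fy * ax * Kt + fy * cx) := by
  have id1 : (ax - bx - (ay - bY)) * (fx - fy) = (wx - wy) * (fx - fy) - (fx - fy) ^ 2
      - hx * fy - hy * fx + bx * fy + bY * fx := by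
    rw [h5, h6]; linear_combination -h1 - h2 + h3 + h4
  rw [id1]
  have := mul_nonneg (sq_nonneg (fx - fy)) hK
  linarith

lemma memHs_const_mul {N : ℕ} {s : ℝ} {Ω : Set (Euc N)} {u : Euc N → ℝ} (c : ℝ)
    (hu : memHs N s Ω u) : memHs N s Ω (fun x => c * u x) := by
  refine ⟨hu.1.const_mul c, ?_, ?_⟩
  · refine lt_of_le_of_lt (lintegral_mono fun x => ?_)
      ((integrable_l2 hu hu).const_mul (c ^ 2)).lintegral_lt_top
    apply ENNReal.ofReal_le_ofReal
    apply le_of_eq; ring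
  · refine lt_of_le_of_lt (lintegral_mono fun x => ?_)
      ((integrable_sq hu).const_mul (c ^ 2)).lintegral_lt_top
    apply ENNReal.ofReal_le_ofReal
    apply le_of_eq; ring

lemma continuous_kern {N : ℕ} {s : ℝ} (hs : 0 < s) :
    Continuous (fun q : Euc N × Euc N => kern N s q.1 q.2) := by
  unfold kern
  refine Continuous.rpow_const (by fun_prop) fun q => Or.inr (by positivity)

lemma continuous_kern2 {N : ℕ} {s : ℝ} (hs : 0 < s) (p : Euc N) :
    Continuous (fun q : Euc N × Euc N => kern N s q.1 (refl N p q.2)) := by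
  unfold kern
  have h := (refl N p).continuous
  refine Continuous.rpow_const (by fun_prop) fun q => Or.inr (by positivity)

lemma kernel_gap {N : ℕ} {s : ℝ} (hs : 0 < s) {p : Euc N} (hp : ‖p‖ = 1) {S D : Set (Euc N)}
    (hS : IsCompact S) (hD : IsCompact D) (hSn : S.Nonempty) (hDn : D.Nonempty)
    (hSp : ∀ x ∈ S, 0 < (inner ℝ x p : ℝ)) (hDp : ∀ x ∈ D, 0 < (inner ℝ x p : ℝ))
    (hSD : ∀ x, x ∈ S → x ∈ D → False)
    (hKlt : ∀ x y, x ≠ y → 0 < (inner ℝ x p : ℝ) → 0 < (inner ℝ y p : ℝ) →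
      (kern N s x (refl N p y))⁻¹ < (kern N s x y)⁻¹) :
    ∃ κ > 0, ∀ x ∈ S, ∀ y ∈ D, κ ≤ (kern N s x y)⁻¹ - (kern N s x (refl N p y))⁻¹ := by
  have c1 : ContinuousOn (fun q : Euc N × Euc N => (kern N s q.1 q.2)⁻¹) (S ×ˢ D) := by
    refine (continuous_kern hs).continuousOn.inv₀ ?_
    rintro q hq
    refine (kern_pos s (fun h => ?_)).ne'
    exact hSD q.1 hq.1 (by rw [h]; exact hq.2)
  have c2 : ContinuousOn (fun q : Euc N × Euc N => (kern N s q.1 (refl N p q.2))⁻¹) (S ×ˢ D) := by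
    refine (continuous_kern2 hs p).continuousOn.inv₀ ?_
    rintro q hq
    refine (kern_pos s (fun h => ?_)).ne'
    have e1 := hSp q.1 hq.1
    have e2 := hDp q.2 hq.2
    rw [h, inner_refl hp] at e1
    linarith
  obtain ⟨q, hq, hmin⟩ := (hS.prod hD).exists_isMinOn (hSn.prod hDn) (c1.sub c2)
  refine ⟨(kern N s q.1 q.2)⁻¹ - (kern N s q.1 (refl N p q.2))⁻¹, ?_,
    fun x hx y hy => isMinOn_iff.1 hmin (x, y) ⟨hx, hy⟩⟩
  exact sub_pos.2 (hKlt _ _ (fun h => hSD q.1 hq.1 (by rw [h]; exact hq.2))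
    (hSp _ hq.1) (hDp _ hq.2))

set_option maxHeartbeats 1000000 in
lemma strong_pos {N : ℕ} (hN : 2 ≤ N) {s : ℝ} (hs : s ∈ Set.Ioo (0 : ℝ) 1) {R : ℝ}
    {p : Euc N} (hp : ‖p‖ = 1) {v : Euc N → ℝ} (hc : Continuous v)
    (hm : memHs N s (Metric.ball 0 R) v)
    (hw : ∀ f : Euc N → ℝ, memHs N s (Metric.ball 0 R) f →
      cNs N s / 2 * bform N s (Metric.ball 0 R) v f
        = mu1 N s (Metric.ball 0 R) * ∫ x in Metric.ball 0 R, v x * f x)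
    (hanti : ∀ x, v (refl N p x) = - v x)
    (hv : ∀ x, 0 ≤ (inner ℝ x p : ℝ) → 0 ≤ v x)
    {x0 y0 : Euc N} (hx0 : x0 ∈ Metric.ball (0 : Euc N) R) (hx0p : 0 < (inner ℝ x0 p : ℝ))
    (hy0 : 0 < v y0) : 0 < v x0 := by
  by_contra hcon
  have hvx0 : v x0 = 0 := le_antisymm (not_lt.1 hcon) (hv _ hx0p.le)
  have hneg : ∀ x, (inner ℝ x p : ℝ) ≤ 0 → v x ≤ 0 := by
    intro x hx
    have := hv (refl N p x) (by rw [inner_refl hp]; linarith)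
    rw [hanti] at this; linarith
  have hposv : ∀ x, 0 < v x → 0 < (inner ℝ x p : ℝ) := by
    intro x hx
    by_contra h
    linarith [hneg x (not_lt.1 h)]
  have hy0p := hposv y0 hy0
  set d : ℝ := inner ℝ x0 p with hd
  set δ := v y0 / 2 with hδ
  have hδ0 : 0 < δ := by positivity
  have hne : x0 ≠ y0 := by rintro rfl; linarith
  have hdist : 0 < dist x0 y0 := dist_pos.2 hne
  obtain ⟨r1, hr1, hr1'⟩ := Metric.continuousAt_iff.1 (hc.continuousAt (x := y0)) δ hδ0
  rw [mem_ball_zero_iff] at hx0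
  -- choose the radius
  obtain ⟨ρ, hρ0, hρ1, hρ2, hρ3, hρ4, hρ5, hρ6⟩ : ∃ ρ : ℝ, 0 < ρ ∧ ρ ≤ 1 / 2 ∧ ρ < R - ‖x0‖ ∧
      ρ ≤ d / 2 ∧ ρ ≤ dist x0 y0 / 3 ∧ ρ < r1 ∧ ρ ≤ (inner ℝ y0 p : ℝ) / 2 := by
    have : ∀ᶠ ρ : ℝ in 𝓝[>] 0, 0 < ρ ∧ ρ < 1 / 2 ∧ ρ < R - ‖x0‖ ∧
      ρ < d / 2 ∧ ρ < dist x0 y0 / 3 ∧ ρ < r1 ∧ ρ < (inner ℝ y0 p : ℝ) / 2 := by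
      have lt : ∀ c : ℝ, 0 < c → ∀ᶠ ρ : ℝ in 𝓝[>] 0, ρ < c := fun c hc =>
        eventually_nhdsWithin_of_eventually_nhds (eventually_lt_nhds hc)
      filter_upwards [self_mem_nhdsWithin, lt (1/2) (by norm_num), lt (R - ‖x0‖) (by linarith),
        lt (d/2) (by linarith), lt (dist x0 y0 / 3) (by linarith), lt r1 hr1,
        lt ((inner ℝ y0 p : ℝ) / 2) (by linarith)] with ρ a1 a2 a3 a4 a5 a6 a7
      exact ⟨a1, a2, a3, a4, a5, a6, a7⟩
    obtain ⟨ρ, a1, a2, a3, a4, a5, a6, a7⟩ := this.exists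
    exact ⟨ρ, a1, a2.le, a3, a4.le, a5.le, a6, a7.le⟩
  set S := Metric.closedBall x0 ρ with hS
  set D := Metric.closedBall y0 ρ with hD
  have hinner : ∀ c x : Euc N, x ∈ Metric.closedBall c ρ →
      (inner ℝ c p : ℝ) - ρ ≤ (inner ℝ x p : ℝ) := by
    intro c x hx
    rw [Metric.mem_closedBall, dist_eq_norm] at hx
    have h := abs_real_inner_le_norm (x - c) p
    rw [hp, mul_one, inner_sub_left] at h
    linarith [(abs_le.1 h).1]
  have hSp : ∀ x ∈ S, d / 2 ≤ (inner ℝ x p : ℝ) := fun x hx => by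
    have := hinner x0 x hx; linarith
  have hDp : ∀ x ∈ D, 0 < (inner ℝ x p : ℝ) := fun x hx => by
    have := hinner y0 x hx; linarith
  have hDv : ∀ x ∈ D, δ ≤ v x := by
    intro x hx
    have := hr1' (lt_of_le_of_lt (Metric.mem_closedBall.1 hx) hρ5)
    rw [Real.dist_eq] at this
    have := (abs_lt.1 this).1
    linarith
  have hSD : ∀ x, x ∈ S → x ∈ D → False := by
    intro x h1 h2
    have h1 := Metric.mem_closedBall.1 h1
    have h2 := Metric.mem_closedBall.1 h2
    have := dist_triangle_left x0 y0 x
    linarith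
  have hSB : S ⊆ Metric.ball (0 : Euc N) R := by
    intro x hx
    rw [Metric.mem_closedBall, dist_eq_norm] at hx
    rw [mem_ball_zero_iff]
    have := norm_add_le (x - x0) x0
    rw [sub_add_cancel] at this
    linarith
  have hSm : MeasurableSet S := Metric.isClosed_closedBall.measurableSet
  have hDm : MeasurableSet D := Metric.isClosed_closedBall.measurableSet
  -- kernels
  set α : ℝ := (N : ℝ) + 2 * s with hα
  have hα0 : 0 < α := by have := hs.1; positivity
  set K : Euc N → Euc N → ℝ := fun x y => (kern N s x y)⁻¹ with hK
  have hK0 : ∀ x y, 0 ≤ K x y := fun x y => inv_nonneg.2 (kern_nonneg _ _ _ _)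
  have hKs : ∀ x y, K x y = K y x := fun x y => by simp only [hK, kern_symm N s x y]
  set Kt : Euc N → Euc N → ℝ := fun x y => K x (refl N p y) with hKt
  have hKt0 : ∀ x y, 0 ≤ Kt x y := fun x y => hK0 _ _
  have hKts : ∀ x y, Kt x y = Kt y x := fun x y => by
    simp only [hKt, hK]
    rw [kern_symm, ← kern_refl s p, refl_refl]
  have hlt : ∀ x y, 0 < (inner ℝ x p : ℝ) → 0 < (inner ℝ y p : ℝ) →
      ‖x - y‖ < ‖x - refl N p y‖ := by
    intro x y h1 h2
    have := norm_sub_refl hp x y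
    have h3 := mul_pos h1 h2
    exact lt_of_pow_lt_pow_left₀ 2 (norm_nonneg _) (by nlinarith)
  have hKlt : ∀ x y, x ≠ y → 0 < (inner ℝ x p : ℝ) → 0 < (inner ℝ y p : ℝ) → Kt x y < K x y := by
    intro x y hxy h1 h2
    have : kern N s x y < kern N s x (refl N p y) :=
      Real.rpow_lt_rpow (norm_nonneg _) (hlt x y h1 h2) hα0
    exact inv_strictAnti₀ (kern_pos s hxy) this
  -- lower bound on the kernel difference
  obtain ⟨κ, hκ0, hκ⟩ : ∃ κ > 0, ∀ x ∈ S, ∀ y ∈ D, κ ≤ K x y - Kt x y := by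
    refine kernel_gap hs.1 hp (isCompact_closedBall x0 ρ) (isCompact_closedBall y0 ρ)
      ⟨x0, Metric.mem_closedBall_self hρ0.le⟩ ⟨y0, Metric.mem_closedBall_self hρ0.le⟩
      (fun x hx => ?_) hDp hSD hKlt
    linarith [hSp x hx]
  -- upper bound on the reflected kernel
  set M : ℝ := (d ^ α)⁻¹ with hM
  have hM0 : 0 ≤ M := by positivity
  have hKtM : ∀ x ∈ S, ∀ y ∈ S, Kt x y ≤ M := by
    intro x hx y hy
    have e1 := hSp x hx
    have e2 := hSp y hy
    have e3 : d ≤ ‖x - refl N p y‖ := by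
      refine le_of_sq_le_sq ?_ (norm_nonneg _)
      rw [norm_sub_refl hp]
      nlinarith [sq_nonneg ‖x - y‖]
    exact inv_anti₀ (by positivity) (Real.rpow_le_rpow hx0p.le e3 hα0.le)
  -- constants
  set C1 : ℝ := 2 * ∫ z, mker N s z with hC1
  have hC10 : 0 ≤ C1 := mul_nonneg zero_le_two (integral_nonneg (mker_nonneg N s))
  set VS : ℝ := volume.real S with hVS
  set VD : ℝ := volume.real D with hVD
  have hVS0 : 0 ≤ VS := measureReal_nonneg
  have hVD0 : 0 < VD := ENNReal.toReal_pos
    (Metric.measure_closedBall_pos volume y0 hρ0).ne' measure_closedBall_lt_top.ne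
  set den : ℝ := C1 + 2 * (M * VS) + 1 with hden
  have hden0 : 0 < den := by positivity
  set ε : ℝ := δ * κ * VD / den with hε
  have hε0 : 0 < ε := by positivity
  -- functions
  set η := bump x0 ρ with hη
  have hηc : Continuous η := bump_cont
  have hηm : memHs N s (Metric.ball 0 R) η := bump_memHs hN hs hρ0 hρ1 R
  set a : Euc N → ℝ := fun x => max (v x) 0 with ha
  set b : Euc N → ℝ := fun x => max (- v x) 0 with hb
  set h : Euc N → ℝ := fun x => max (a x - ε * η x) 0 with hh
  set φ : Euc N → ℝ := fun x => max (ε * η x - a x) 0 with hφ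
  have ha0 : ∀ x, 0 ≤ a x := fun x => le_max_right _ _
  have hb0 : ∀ x, 0 ≤ b x := fun x => le_max_right _ _
  have hh0 : ∀ x, 0 ≤ h x := fun x => le_max_right _ _
  have hφ0 : ∀ x, 0 ≤ φ x := fun x => le_max_right _ _
  have hφc : Continuous φ := by simp only [hφ, ha]; fun_prop
  have hφS : ∀ x, x ∉ S → φ x = 0 := by
    intro x hx
    simp only [hφ, hη]
    rw [bump_zero hρ0 hx]
    exact max_eq_right (by linarith [ha0 x])
  have hvab : ∀ x, v x = a x - b x := by
    intro x
    simp only [ha, hb]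
    rcases le_total (v x) 0 with h | h
    · rw [max_eq_right h, max_eq_left (by linarith)]; ring
    · rw [max_eq_left h, max_eq_right (by linarith)]; ring
  have hbφ : ∀ x, b x * φ x = 0 := by
    intro x
    by_cases hx : x ∈ S
    · have : b x = 0 := max_eq_right (by linarith [hv x (by linarith [hSp x hx])])
      rw [this, zero_mul]
    · rw [hφS x hx, mul_zero]
  have hhφ : ∀ x, h x * φ x = 0 := by
    intro x
    simp only [hh, hφ]
    rcases le_total (a x) (ε * η x) with h | h
    · rw [max_eq_right (by linarith), zero_mul]
    · rw [max_eq_right (by linarith : ε * η x - a x ≤ 0), mul_zero]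
  have hahφ : ∀ x, a x = ε * η x - φ x + h x := by
    intro x
    simp only [hh, hφ]
    rcases le_total (a x) (ε * η x) with h | h
    · rw [max_eq_right (by linarith : a x - ε * η x ≤ 0),
        max_eq_left (by linarith : (0 : ℝ) ≤ ε * η x - a x)]; ring
    · rw [max_eq_right (by linarith : ε * η x - a x ≤ 0),
        max_eq_left (by linarith : (0 : ℝ) ≤ a x - ε * η x)]; ring
  have hab : ∀ x, b (refl N p x) = a x := by
    intro x; simp only [ha, hb, hanti, neg_neg]
  set c : Euc N → ℝ := fun y => ε * M * S.indicator (fun _ => 1) y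
    - δ * κ * D.indicator (fun _ => 1) y with hcdef
  -- membership of the test function
  have hφm : memHs N s (Metric.ball 0 R) φ := by
    have hεη : memHs N s (Metric.ball 0 R) (fun x => ε * η x) :=
      memHs_const_mul ε hηm
    refine memHs_of_le hεη hm hφc.measurable (fun x => ?_) fun x y => ?_
    · rw [abs_of_nonneg (hφ0 x)]
      refine max_le ?_ (by positivity)
      linarith [le_abs_self (ε * η x), abs_nonneg (v x), ha0 x]
    · have h1 : |φ x - φ y| ≤ |(ε * η x - a x) - (ε * η y - a y)| := by
        refine (abs_max_sub_max_le_max _ _ _ _).trans ?_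
        simp
      have h2 : |a x - a y| ≤ |v x - v y| := by
        refine (abs_max_sub_max_le_max _ _ _ _).trans ?_
        simp
      have h3 : (ε * η x - a x) - (ε * η y - a y) = (ε * η x - ε * η y) - (a x - a y) := by ring
      rw [h3] at h1
      exact h1.trans ((abs_sub _ _).trans (by linarith))
  have hφi : Integrable φ := by
    refine hφc.integrable_of_hasCompactSupport ?_
    exact HasCompactSupport.intro (isCompact_closedBall x0 ρ) hφS
  have hφpos : 0 < ∫ x, φ x := by
    refine hφc.integral_pos_of_hasCompactSupport_nonneg_nonzero
      (HasCompactSupport.intro (isCompact_closedBall x0 ρ) hφS) hφ0 (x := x0) ?_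
    have : φ x0 = ε * ρ ^ 2 := by
      have e1 : η x0 = ρ ^ 2 := by
        simp only [hη, bump, sub_self, norm_zero]
        rw [max_eq_left (by nlinarith)]
        ring
      have e2 : a x0 = 0 := by simp only [ha, hvx0, max_self]
      simp only [hφ]
      rw [e1, e2, sub_zero]
      exact max_eq_left (by positivity)
    rw [this]; positivity
  -- the whole-space versions of the forms
  have hsupp : ∀ (f : Euc N → ℝ) (q : Euc N × Euc N), q ∉ reg N (Metric.ball 0 R) →
      (f q.1 - f q.2) * (φ q.1 - φ q.2) / kern N s q.1 q.2 = 0 := by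
    intro f q hq
    simp only [reg, Set.mem_ofPred_eq, not_or] at hq
    rw [hφS q.1 (fun h => hq.1 (subset_closure (hSB h))),
      hφS q.2 (fun h => hq.2 (subset_closure (hSB h)))]
    simp
  have hwhole : ∀ f : Euc N → ℝ, memHs N s (Metric.ball 0 R) f →
      Integrable (fun q : Euc N × Euc N =>
        (f q.1 - f q.2) * (φ q.1 - φ q.2) / kern N s q.1 q.2) := by
    intro f hf
    rw [← integrableOn_iff_integrable_of_support_subset (s := reg N (Metric.ball 0 R))]
    · exact integrable_bform hf hφm
    · intro q hq
      by_contra hcc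
      exact hq (hsupp f q hcc)
  have hEi := hwhole v hm
  have hηi := hwhole η hηm
  have hbf : bform N s (Metric.ball 0 R) v φ = ∫ q : Euc N × Euc N,
      (v q.1 - v q.2) * (φ q.1 - φ q.2) / kern N s q.1 q.2 :=
    setIntegral_eq_integral_of_forall_compl_eq_zero (hsupp v)
  -- terms
  have hac : Continuous a := by simp only [ha]; fun_prop
  have hbc : Continuous b := by simp only [hb]; fun_prop
  have hKm : Measurable (fun q : Euc N × Euc N => K q.1 q.2) := (measurable_kern N s).inv
  have hT1 : Integrable (fun q : Euc N × Euc N => φ q.1 * b q.2 * K q.1 q.2) := by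
    refine Integrable.mono' hEi.norm ?_ (ae_of_all _ fun q => ?_)
    · exact (((hφc.measurable.comp measurable_fst).mul
        (hbc.measurable.comp measurable_snd)).mul hKm).aestronglyMeasurable
    · rw [Real.norm_eq_abs, Real.norm_eq_abs, abs_of_nonneg
        (mul_nonneg (mul_nonneg (hφ0 _) (hb0 _)) (hK0 _ _))]
      rcases (mul_nonneg (hφ0 q.1) (hb0 q.2)).eq_or_lt with h0 | h0
      · rw [← h0, zero_mul]
        exact abs_nonneg _
      · refine le_trans ?_ (le_abs_self _)
        rw [div_eq_mul_inv]
        refine mul_le_mul_of_nonneg_right ?_ (hK0 q.1 q.2)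
        have hbq : b q.2 ≠ 0 := fun e => by simp [e] at h0
        have hφq : φ q.1 ≠ 0 := fun e => by simp [e] at h0
        have hφq2 : φ q.2 = 0 := (mul_eq_zero.1 (hbφ q.2)).resolve_left hbq
        have hqS : q.1 ∈ S := by
          by_contra hcc
          exact hφq (hφS _ hcc)
        have hv1 : 0 ≤ v q.1 := hv _ (by linarith [hSp _ hqS])
        have hv2 : v q.2 ≤ - b q.2 := by
          rcases max_choice (- v q.2) 0 with e | e
          · have : b q.2 = - v q.2 := e
            linarith
          · exact absurd e hbq
        rw [hφq2, sub_zero, mul_comm]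
        exact mul_le_mul_of_nonneg_right (by linarith) (hφ0 _)
  have hmpR : MeasurePreserving (fun q : Euc N × Euc N => (q.1, refl N p q.2)) volume volume :=
    (MeasurePreserving.id volume).prod (refl_mp p)
  have hembR : MeasurableEmbedding (fun q : Euc N × Euc N => (q.1, refl N p q.2)) :=
    ((Homeomorph.refl (Euc N)).prodCongr (refl N p).toHomeomorph).measurableEmbedding
  have hcompR : (fun q : Euc N × Euc N => φ q.1 * b q.2 * K q.1 q.2) ∘
      (fun q : Euc N × Euc N => (q.1, refl N p q.2)) =
      fun q => φ q.1 * a q.2 * Kt q.1 q.2 := by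
    ext q; simp only [Function.comp_apply, hab, hKt]
  have hT2 : Integrable (fun q : Euc N × Euc N => φ q.1 * a q.2 * Kt q.1 q.2) := by
    rw [← hcompR]; exact (hmpR.integrable_comp_emb hembR).2 hT1
  have hT12 : ∫ q : Euc N × Euc N, φ q.1 * a q.2 * Kt q.1 q.2 =
      ∫ q : Euc N × Euc N, φ q.1 * b q.2 * K q.1 q.2 := by
    rw [← hcompR]; exact hmpR.integral_comp hembR (fun q : Euc N × Euc N => φ q.1 * b q.2 * K q.1 q.2)
  have hci : Integrable c := by
    have hi : ∀ A : Set (Euc N), MeasurableSet A → volume A ≠ ⊤ →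
        Integrable (A.indicator (fun _ => (1 : ℝ))) := fun A hA hA' =>
      (integrable_indicator_iff hA).2 (integrableOn_const hA')
    exact ((hi S hSm measure_closedBall_lt_top.ne).const_mul _).sub
      ((hi D hDm measure_closedBall_lt_top.ne).const_mul _)
  have hcint : ∫ y, c y = ε * M * VS - δ * κ * VD := by
    have hi : ∀ A : Set (Euc N), MeasurableSet A → volume A ≠ ⊤ →
        Integrable (A.indicator (fun _ => (1 : ℝ))) := fun A hA hA' =>
      (integrable_indicator_iff hA).2 (integrableOn_const hA')
    simp only [hcdef]
    rw [integral_sub ((hi S hSm measure_closedBall_lt_top.ne).const_mul _)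
      ((hi D hDm measure_closedBall_lt_top.ne).const_mul _), integral_const_mul,
      integral_const_mul, integral_indicator_const _ hSm, integral_indicator_const _ hDm]
    simp [hVS, hVD]
  have hT3 : Integrable (fun q : Euc N × Euc N => φ q.1 * c q.2) := hφi.mul_prod hci
  have hT3i : ∫ q : Euc N × Euc N, φ q.1 * c q.2 = (∫ x, φ x) * (ε * M * VS - δ * κ * VD) := by
    rw [← hcint]; exact integral_prod_mul φ c
  set T : Euc N × Euc N → ℝ := fun q => φ q.1 * b q.2 * K q.1 q.2 - φ q.1 * a q.2 * Kt q.1 q.2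
    + φ q.1 * c q.2 with hT
  have hTi : Integrable T := (hT1.sub hT2).add hT3
  have hTint : ∫ q, T q = (∫ x, φ x) * (ε * M * VS - δ * κ * VD) := by
    have hT12i : Integrable (fun q : Euc N × Euc N =>
      φ q.1 * b q.2 * K q.1 q.2 - φ q.1 * a q.2 * Kt q.1 q.2) := hT1.sub hT2
    simp only [hT]
    rw [integral_add hT12i hT3, integral_sub hT1 hT2, hT12, hT3i]; ring
  have hTsi : Integrable (fun q : Euc N × Euc N => T q.swap) := hTi.swap
  have hTsint : ∫ q : Euc N × Euc N, T q.swap = ∫ q, T q := integral_prod_swap T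
  -- the pointwise inequality
  have hside : ∀ x y, φ x * (a y * Kt x y - c y) ≤ φ x * (h y * K x y) := by
    intro x y
    by_cases hx : x ∈ S
    swap
    · rw [hφS x hx]; simp
    by_cases hφx : φ x = 0
    · rw [hφx]; simp
    refine mul_le_mul_of_nonneg_left ?_ (hφ0 x)
    have hxp : 0 < (inner ℝ x p : ℝ) := by linarith [hSp x hx]
    have hhy : a y - ε * η y ≤ h y := le_max_left _ _
    -- the bound for the barrier contribution
    have hηS : ε * η y * Kt x y ≤ ε * M * S.indicator (fun _ => 1) y := by
      by_cases hy : y ∈ S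
      · rw [indicator_of_mem hy, mul_one, mul_assoc]
        refine mul_le_mul_of_nonneg_left ?_ hε0.le
        calc η y * Kt x y ≤ 1 * M :=
              mul_le_mul (bump_le hρ0 hρ1 y) (hKtM x hx y hy) (hKt0 _ _) zero_le_one
          _ = M := one_mul _
      · rw [indicator_of_notMem hy, hη, bump_zero hρ0 hy]; simp
    have hmain : h y * Kt x y + δ * κ * D.indicator (fun _ => 1) y ≤ h y * K x y := by
      by_cases hyD : y ∈ D
      · rw [indicator_of_mem hyD, mul_one]
        have e1 : δ ≤ h y := by
          refine le_trans ?_ hhy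
          rw [hη, bump_zero hρ0 (fun hh => hSD y hh hyD)]
          have := hDv y hyD
          have := le_max_left (v y) 0
          simp only [ha]; linarith
        have e2 := hκ x hx y hyD
        have := mul_le_mul e1 e2 hκ0.le (hh0 y)
        linarith
      · rw [indicator_of_notMem hyD, mul_zero, add_zero]
        rcases (hh0 y).eq_or_lt with e | e
        · rw [← e]; simp
        · refine mul_le_mul_of_nonneg_left ?_ e.le
          have hxy : x ≠ y := by
            rintro rfl
            rcases mul_eq_zero.1 (hhφ x) with e5 | e5
            · linarith
            · exact hφx e5
          have hay : 0 < a y := by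
            by_contra hcc
            have : a y = 0 := le_antisymm (not_lt.1 hcc) (ha0 y)
            have hn : 0 ≤ ε * η y := mul_nonneg hε0.le (bump_nonneg y)
            have : h y = 0 := max_eq_right (by linarith)
            linarith
          have hvy : 0 < v y := by
            by_contra hcc
            have : a y = 0 := max_eq_right (not_lt.1 hcc)
            linarith
          exact (hKlt x y hxy hxp (hposv y hvy)).le
    have e3 := mul_le_mul_of_nonneg_right hhy (hKt0 x y)
    simp only [hcdef]
    linarith
  have hpt : ∀ q : Euc N × Euc N, (v q.1 - v q.2) * (φ q.1 - φ q.2) / kern N s q.1 q.2 ≤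
      ε * ((η q.1 - η q.2) * (φ q.1 - φ q.2) / kern N s q.1 q.2) + T q + T q.swap := by
    rintro ⟨x, y⟩
    have := scalar_ineq (hbφ x) (hbφ y) (hhφ x) (hhφ y) (hahφ x) (hahφ y) (hK0 x y)
      (hside x y) (cx := c x) (by rw [hKts x y, hKs x y]; exact hside y x)
    simp only [hT, Prod.swap, div_eq_mul_inv]
    rw [hvab x, hvab y, hKts y x, hKs y x]
    change _ * K x y ≤ ε * (_ * K x y) + _ + _
    linarith
  have hle : ∫ q : Euc N × Euc N, (v q.1 - v q.2) * (φ q.1 - φ q.2) / kern N s q.1 q.2 ≤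
      ε * (C1 * ∫ x, φ x) + 2 * ((∫ x, φ x) * (ε * M * VS - δ * κ * VD)) := by
    refine (integral_mono hEi (((hηi.const_mul ε).add hTi).add hTsi) hpt).trans ?_
    have e1 : ∫ q, ((fun q : Euc N × Euc N =>
        ε * ((η q.1 - η q.2) * (φ q.1 - φ q.2) / kern N s q.1 q.2)) + T + fun q : Euc N × Euc N => T q.swap) q =
        ε * (∫ q : Euc N × Euc N, (η q.1 - η q.2) * (φ q.1 - φ q.2) / kern N s q.1 q.2)
        + (∫ q, T q) + ∫ q, T q := by
      rw [integral_add' ((hηi.const_mul ε).add hTi) hTsi, integral_add' (hηi.const_mul ε) hTi,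
        hTsint, integral_const_mul]
    refine e1.trans_le ?_
    rw [hTint]
    have := mul_le_mul_of_nonneg_left
      (bump_bform (x0 := x0) hN hs hρ0 hρ1 hφi hφ0 hηi) hε0.le
    linarith
  have hneg' : bform N s (Metric.ball 0 R) v φ < 0 := by
    rw [hbf]
    refine hle.trans_lt ?_
    have e : ε * den = δ * κ * VD := by rw [hε]; field_simp
    have e4 : 0 < δ * κ * VD := by positivity
    have : ε * (C1 * ∫ x, φ x) + 2 * ((∫ x, φ x) * (ε * M * VS - δ * κ * VD)) =
      (∫ x, φ x) * (ε * den - ε - 2 * (δ * κ * VD)) := by rw [hden]; ring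
    rw [this, e]
    exact mul_neg_of_pos_of_neg hφpos (by linarith)
  have hge : 0 ≤ mu1 N s (Metric.ball 0 R) * ∫ x in Metric.ball 0 R, v x * φ x := by
    refine mul_nonneg (mu1_nonneg hs _) (integral_nonneg fun x => ?_)
    by_cases hx : x ∈ S
    · exact mul_nonneg (hv x (by linarith [hSp x hx])) (hφ0 x)
    · simp [hφS x hx]
  rw [← hw φ hφm] at hge
  have := cNs_pos (N := N) hs
  nlinarith

end FracNeumann
namespace FracNeumann

lemma zero_of_ball {N : ℕ} {s R : ℝ} (hR : 0 < R) (hs : s ∈ Set.Ioo (0 : ℝ) 1) {v : Euc N → ℝ}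
    (hc : Continuous v) (hm : memHs N s (Metric.ball 0 R) v)
    (hw : cNs N s / 2 * bform N s (Metric.ball 0 R) v v
        = mu1 N s (Metric.ball 0 R) * ∫ x in Metric.ball 0 R, v x * v x)
    (h0 : v =ᵐ[volume.restrict (Metric.ball 0 R)] 0) : ∀ x, v x = 0 := by
  have hball : ∀ x ∈ Metric.ball (0 : Euc N) R, v x = 0 := by
    intro x hx
    exact Measure.eqOn_open_of_ae_eq h0 Metric.isOpen_ball hc.continuousOn
      continuousOn_const hx
  have hInt : ∫ x in Metric.ball (0 : Euc N) R, v x * v x = 0 := by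
    rw [setIntegral_congr_fun (g := fun _ => (0 : ℝ)) measurableSet_ball
      (fun x hx => by simp [hball x hx])]
    simp
  have hb : bform N s (Metric.ball 0 R) v v = 0 := by
    rw [hInt, mul_zero] at hw
    have := cNs_pos (N := N) hs
    rcases mul_eq_zero.1 hw with h | h
    · linarith
    · exact h
  have hnn : ∀ q : Euc N × Euc N,
      0 ≤ (v q.1 - v q.2) * (v q.1 - v q.2) / kern N s q.1 q.2 := fun q =>
    div_nonneg (mul_self_nonneg _) (kern_nonneg _ _ _ _)
  have hae := (integral_eq_zero_iff_of_nonneg hnn (integrable_bform hm hm)).1 hb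
  have hregm : MeasurableSet (reg N (Metric.ball (0 : Euc N) R)) := by
    have : reg N (Metric.ball (0 : Euc N) R) =
      Prod.fst ⁻¹' closure (Metric.ball (0 : Euc N) R) ∪
      Prod.snd ⁻¹' closure (Metric.ball (0 : Euc N) R) := rfl
    rw [this]
    exact (measurable_fst isClosed_closure.measurableSet).union
      (measurable_snd isClosed_closure.measurableSet)
  rw [Filter.EventuallyEq, ae_restrict_iff' hregm] at hae
  intro y
  by_contra hy
  set U : Set (Euc N × Euc N) := Metric.ball (0 : Euc N) R ×ˢ {z | v z ≠ 0} with hU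
  have hUo : IsOpen U := Metric.isOpen_ball.prod (isOpen_ne_fun hc continuous_const)
  have hUpos : 0 < volume U := hUo.measure_pos _ ⟨(0, y), by simp [hU, hR, hy]⟩
  refine hUpos.ne' (measure_mono_null ?_ (ae_iff.1 hae))
  rintro ⟨x, z⟩ ⟨hx, hz⟩
  simp only [Set.mem_ofPred_eq, Classical.not_imp]
  have hx' : x ∈ Metric.ball (0 : Euc N) R := hx
  have hz' : v z ≠ 0 := hz
  refine ⟨Or.inl (subset_closure hx'), ?_⟩
  have hne : x ≠ z := by
    rintro rfl
    exact hz' (hball x hx')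
  simp only [hball x hx', zero_sub, Pi.zero_apply]
  exact div_ne_zero (mul_self_ne_zero.2 (neg_ne_zero.2 hz')) (kern_pos s hne).ne'

lemma two_nodal_aux {N : ℕ} {R : ℝ} (hR : 0 < R) {p : Euc N} (hp : ‖p‖ = 1) {v : Euc N → ℝ}
    (hpos : ∀ x ∈ Metric.ball (0 : Euc N) R, 0 < (inner ℝ x p : ℝ) → v x ≠ 0)
    (hneg : ∀ x ∈ Metric.ball (0 : Euc N) R, (inner ℝ x p : ℝ) < 0 → v x ≠ 0)
    (hzero : ∀ x, (inner ℝ x p : ℝ) = 0 → v x = 0) :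
    TwoNodal N (Metric.ball 0 R) v := by
  unfold TwoNodal
  set X := {x : Euc N // x ∈ Metric.ball (0 : Euc N) R ∧ v x ≠ 0} with hX
  have hin : Continuous (fun x : X => (inner ℝ (x : Euc N) p : ℝ)) := by fun_prop
  have hne : ∀ x : X, (inner ℝ (x : Euc N) p : ℝ) ≠ 0 := fun x h => x.2.2 (hzero _ h)
  have hclopen : IsClopen {x : X | 0 < (inner ℝ (x : Euc N) p : ℝ)} := by
    refine ⟨?_, isOpen_lt continuous_const hin⟩
    have : {x : X | 0 < (inner ℝ (x : Euc N) p : ℝ)} =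
        {x : X | 0 ≤ (inner ℝ (x : Euc N) p : ℝ)} := by
      ext x
      simp only [Set.mem_ofPred_eq]
      exact ⟨fun h => le_of_lt h, fun h => lt_of_le_of_ne h (hne x).symm⟩
    rw [this]
    exact isClosed_le continuous_const hin
  set f : X → Prop := fun x => 0 < (inner ℝ (x : Euc N) p : ℝ) with hf
  set g : X → Bool := fun x => @decide (f x) (Classical.propDecidable _) with hg
  have hgt : ∀ x, g x = true ↔ 0 < (inner ℝ (x : Euc N) p : ℝ) := by
    intro x; simp [hg, hf]
  have hgc : Continuous g := by
    rw [continuous_discrete_rng]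
    intro b
    cases b
    · have : g ⁻¹' {false} = {x : X | 0 < (inner ℝ (x : Euc N) p : ℝ)}ᶜ := by
        ext x
        rw [Set.mem_preimage, Set.mem_singleton_iff, Set.mem_compl_iff, ← Bool.not_eq_true,
          hgt]
        rfl
      rw [this]; exact hclopen.compl.isOpen
    · have : g ⁻¹' {true} = {x : X | 0 < (inner ℝ (x : Euc N) p : ℝ)} := by
        ext x
        rw [Set.mem_preimage, Set.mem_singleton_iff, hgt]
        rfl
      rw [this]; exact hclopen.isOpen
  have hlin : IsLinearMap ℝ (fun x : Euc N => (inner ℝ x p : ℝ)) :=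
    ⟨fun x y => inner_add_left _ _ _, fun c x => by simp [inner_smul_left]⟩
  have hpre : ∀ A : Set (Euc N), Convex ℝ A →
      (∀ x ∈ A, x ∈ Metric.ball (0 : Euc N) R ∧ v x ≠ 0) →
      IsPreconnected ((Subtype.val : X → Euc N) ⁻¹' A) := by
    intro A hA hsub
    refine (Topology.IsInducing.isPreconnected_image (f := (Subtype.val : X → Euc N))
      Topology.IsInducing.subtypeVal).1 ?_
    have : Set.image (Subtype.val : X → Euc N) ((Subtype.val : X → Euc N) ⁻¹' A) = A := by
      rw [Set.image_preimage_eq_iff]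
      exact fun x hx => ⟨⟨x, hsub x hx⟩, rfl⟩
    rw [this]
    exact hA.isPreconnected
  have hP := hpre (Metric.ball (0 : Euc N) R ∩ {x | 0 < (inner ℝ x p : ℝ)})
    ((convex_ball _ _).inter (convex_halfSpace_gt hlin 0))
    (fun x hx => ⟨hx.1, hpos x hx.1 hx.2⟩)
  have hM := hpre (Metric.ball (0 : Euc N) R ∩ {x | (inner ℝ x p : ℝ) < 0})
    ((convex_ball _ _).inter (convex_halfSpace_lt hlin 0))
    (fun x hx => ⟨hx.1, hneg x hx.1 hx.2⟩)
  have hpp : (inner ℝ p p : ℝ) = 1 := by rw [real_inner_self_eq_norm_sq, hp]; norm_num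
  have hbij : Function.Bijective hgc.connectedComponentsLift := by
    constructor
    · intro C C'
      obtain ⟨x, rfl⟩ := ConnectedComponents.surjective_coe C
      obtain ⟨y, rfl⟩ := ConnectedComponents.surjective_coe C'
      rw [Continuous.connectedComponentsLift_apply_coe,
        Continuous.connectedComponentsLift_apply_coe]
      intro hxy
      rw [ConnectedComponents.coe_eq_coe']
      by_cases hx : 0 < (inner ℝ (x : Euc N) p : ℝ)
      · have hy : 0 < (inner ℝ (y : Euc N) p : ℝ) := by rw [← hgt, ← hxy, hgt]; exact hx
        exact hP.subset_connectedComponent (x := y) ⟨y.2.1, hy⟩ ⟨x.2.1, hx⟩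
      · have hy : ¬ 0 < (inner ℝ (y : Euc N) p : ℝ) := by rw [← hgt, ← hxy, hgt]; exact hx
        exact hM.subset_connectedComponent (x := y)
          ⟨y.2.1, lt_of_le_of_ne (not_lt.1 hy) (hne y)⟩
          ⟨x.2.1, lt_of_le_of_ne (not_lt.1 hx) (hne x)⟩
    · have hmem : ∀ c : ℝ, |c| = R / 2 → c • p ∈ Metric.ball (0 : Euc N) R := by
        intro c hc
        rw [mem_ball_zero_iff, norm_smul, hp, Real.norm_eq_abs, hc]; linarith
      have hinn : ∀ c : ℝ, (inner ℝ (c • p) p : ℝ) = c := by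
        intro c; rw [real_inner_smul_left, hpp, mul_one]
      intro b
      cases b
      · have hm := hmem (-(R / 2)) (by rw [abs_neg, abs_of_pos (by linarith)])
        have hi := hinn (-(R / 2))
        refine ⟨((⟨(-(R / 2)) • p, hm, hneg _ hm (by rw [hi]; linarith)⟩ : X) :
          ConnectedComponents X), ?_⟩
        rw [Continuous.connectedComponentsLift_apply_coe, ← Bool.not_eq_true, hgt]
        change ¬ 0 < (inner ℝ ((-(R / 2)) • p) p : ℝ)
        rw [hi]; linarith
      · have hm := hmem (R / 2) (by rw [abs_of_pos (by linarith)])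
        have hi := hinn (R / 2)
        refine ⟨((⟨(R / 2) • p, hm, hpos _ hm (by rw [hi]; linarith)⟩ : X) :
          ConnectedComponents X), ?_⟩
        rw [Continuous.connectedComponentsLift_apply_coe, hgt]
        change 0 < (inner ℝ ((R / 2) • p) p : ℝ)
        rw [hi]; linarith
  rw [Nat.card_eq_of_bijective _ hbij]
  simp

end FracNeumann
namespace FracNeumann

/-- Proposition 4.5: if a continuous first nontrivial eigenfunction `u` in a
ball is nonradial and foliated Schwarz symmetric w.r.t. `p`, then `u - u∘σ_p` is a first
nontrivial eigenfunction, antisymmetric w.r.t. `{x·p = 0}`, foliated Schwarz symmetric w.r.t.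
`p`, with exactly two nodal domains in `B`. -/
theorem statement16 (N : ℕ) (hN : 2 ≤ N) (s : ℝ) (hs : s ∈ Set.Ioo (0 : ℝ) 1)
    (R : ℝ) (hR : 0 < R) (B : Set (Euc N)) (hB : B = Metric.ball (0 : Euc N) R)
    (u : Euc N → ℝ) (hu : IsFirstEigen N s B u) (hc : Continuous u)
    (hnonrad : ¬ Radial N u)
    (p : Euc N) (hp : ‖p‖ = 1) (hfs : FoliatedSchwarz N p u) :
    IsFirstEigen N s B (fun x => u x - u (reflect N p x)) ∧
    (∀ x : Euc N,
      u (reflect N p x) - u (reflect N p (reflect N p x)) = -(u x - u (reflect N p x))) ∧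
    FoliatedSchwarz N p (fun x => u x - u (reflect N p x)) ∧
    TwoNodal N B (fun x => u x - u (reflect N p x)) := by
  subst hB
  have hcr : Continuous (refl N p) := (refl N p).continuous
  simp only [reflect_eq hp, refl_refl]
  obtain ⟨hm, hi, hw⟩ := anti_weak (p := p) hu
  obtain ⟨uh, huh, huu⟩ := hfs
  -- the reflected function in polar form
  have hur : ∀ x : Euc N, x ≠ 0 → u (refl N p x) =
      uh ‖x‖ (Real.pi - Real.arccos ((inner ℝ x p : ℝ) / ‖x‖)) := by
    intro x hx
    have hx' : refl N p x ≠ 0 := by simpa using hx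
    rw [huu _ hx', LinearIsometryEquiv.norm_map, inner_refl hp, neg_div, Real.arccos_neg]
  have hvc : Continuous (fun x => u x - u (refl N p x)) := hc.sub (hc.comp hcr)
  have hmem : ∀ t : ℝ, Real.arccos t ∈ Icc 0 Real.pi := fun t =>
    ⟨Real.arccos_nonneg t, Real.arccos_le_pi t⟩
  have hmem' : ∀ θ ∈ Icc 0 Real.pi, Real.pi - θ ∈ Icc 0 Real.pi := fun θ hθ =>
    ⟨by linarith [hθ.2], by linarith [hθ.1]⟩
  have hv : ∀ x, 0 ≤ (inner ℝ x p : ℝ) → 0 ≤ u x - u (refl N p x) := by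
    intro x hx
    by_cases h0 : x = 0
    · rw [h0, map_zero, sub_self]
    · rw [hur x h0, huu x h0, sub_nonneg]
      refine huh _ (hmem _) (hmem' _ (hmem _)) ?_
      have := Real.arccos_le_pi_div_two.2 (div_nonneg hx (norm_nonneg x))
      linarith
  have hanti : ∀ x, u (refl N p x) - u (refl N p (refl N p x)) = -(u x - u (refl N p x)) := by
    intro x; rw [refl_refl]; ring
  have hnontriv : ¬ ((fun x => u x - u (refl N p x)) =ᵐ[volume.restrict (Metric.ball 0 R)] 0) := by
    intro h0
    have hz := zero_of_ball hR hs hvc hm (hw _ hm) h0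
    apply hnonrad
    refine ⟨fun r => if r = 0 then u 0 else uh r 0, fun x => ?_⟩
    by_cases hx : x = 0
    · simp [hx]
    have hr : 0 < ‖x‖ := norm_pos_iff.2 hx
    simp only [hr.ne', if_false]
    have hpp : (inner ℝ p p : ℝ) = 1 := by rw [real_inner_self_eq_norm_sq, hp]; norm_num
    have hn : ‖‖x‖ • p‖ = ‖x‖ := by rw [norm_smul, hp]; simp
    have hne : ‖x‖ • p ≠ 0 := by rw [← norm_pos_iff, hn]; exact hr
    have e1 := huu _ hne
    have e2 := hur _ hne
    have e3 : (inner ℝ (‖x‖ • p) p : ℝ) / ‖x‖ = 1 := by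
      rw [real_inner_smul_left, hpp, mul_one, div_self hr.ne']
    rw [hn, e3, Real.arccos_one] at e1 e2
    rw [sub_zero] at e2
    have e4 : u (‖x‖ • p) - u (refl N p (‖x‖ • p)) = 0 := hz _
    have hpi := Real.pi_pos.le
    have hA := hmem ((inner ℝ x p : ℝ) / ‖x‖)
    have f1 := huh ‖x‖ (left_mem_Icc.2 hpi) hA hA.1
    have f2 := huh ‖x‖ hA (right_mem_Icc.2 hpi) hA.2
    rw [huu x hx]
    linarith
  obtain ⟨y0, hy0⟩ : ∃ y0, 0 < u y0 - u (refl N p y0) := by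
    by_contra hcc
    push Not at hcc
    refine hnontriv (ae_of_all _ fun x => ?_)
    have a1 := hcc x
    have a2 := hcc (refl N p x)
    rw [hanti] at a2
    change u x - u (refl N p x) = 0
    linarith
  have hsp : ∀ x ∈ Metric.ball (0 : Euc N) R, 0 < (inner ℝ x p : ℝ) →
      0 < u x - u (refl N p x) := fun x hx hxp =>
    strong_pos hN hs hp hvc hm hw hanti hv hx hxp hy0
  refine ⟨⟨hm, hnontriv, hi, hw⟩, fun x => by ring, ?_, ?_⟩
  · refine ⟨fun r θ => uh r θ - uh r (Real.pi - θ), fun r => ?_, fun x hx => ?_⟩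
    · intro θ1 h1 θ2 h2 h12
      have g1 := huh r h1 h2 h12
      have g2 := huh r (hmem' _ h2) (hmem' _ h1) (by linarith)
      change uh r θ2 - uh r (Real.pi - θ2) ≤ uh r θ1 - uh r (Real.pi - θ1)
      linarith
    · simp only
      rw [hur x hx, huu x hx]
  · refine two_nodal_aux hR hp (fun x hx hxp => (hsp x hx hxp).ne') (fun x hx hxp => ?_)
      (fun x hx => ?_)
    · have h1 := hsp (refl N p x)
        (by rw [mem_ball_zero_iff, LinearIsometryEquiv.norm_map]; exact mem_ball_zero_iff.1 hx)
        (by rw [inner_refl hp]; linarith)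
      rw [hanti] at h1
      linarith
    · have h1 := hv x hx.ge
      have h2 := hv (refl N p x) (by rw [inner_refl hp, hx, neg_zero])
      rw [hanti] at h2
      linarith

end FracNeumann
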